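/- arXiv:2001.04165 — 8 statements merged into one kernel-verified Lean document; each statement's English description precedes it below -/
import Mathlib

section
/- Let k be a field, G an additive abelian group, A an associative G-graded k-algebra with no zero divisors, ε : G → G → kˣ a bimultiplicative skew-symmetric commutation factor (ε g h * ε h g = 1, ε (g+h) l = ε g l * ε h l, ε g (h+l) = ε g h * ε g l) such that A is ε-commutative (a * b = ε g h • (b * a) for all a ∈ 𝒜 g, b ∈ 𝒜 h). Let φ₁, φ₂ be two commuting k-algebra automorphisms of A preserving each component 𝒜 g, and let h₀ ∈ 𝒜 0 be a fixed element of degree 0. Define the product a ∘ b := φ₁(a) * φ₂(b) * h₀. Then (binary Toyoda-type theorem) for all g₁,g₂,g₃,g₄ ∈ G and all homogeneous a ∈ 𝒜 g₁, b ∈ 𝒜 g₂, c ∈ 𝒜 g₃, d ∈ 𝒜 g₄ one has (a ∘ b) ∘ (c ∘ d) = ε g₂ g₃ • ((a ∘ c) ∘ (b ∘ d)); i.e. the product ∘ is almost medial with mediality factor determined by the commutation factor ε. -/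
/-!
Write `B = φ₁ (φ₂ b)`, `C = φ₂ (φ₁ c)` and `H = φ₁ h₀`. Since the automorphisms commute, the two
sides of the identity differ only in the order of a middle factor: `B * H * C` on the left,
`C * H * B` on the right. By bimultiplicativity `ε 0 g = 1`, so the degree-zero element `H` commutes
with homogeneous elements, and interchanging `B` and `C` costs exactly `ε g₂ g₃`.
-/


/-- Binary Toyoda-type theorem: the product `a ∘ b := φ₁ a * φ₂ b * h₀` on an
ε-commutative graded algebra is almost medial with mediality factor given by ε. -/
theorem binary_toyoda_almost_medial
    (k : Type*) [Field k] (G : Type*) [AddCommGroup G]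
    (A : Type*) [Ring A] [Algebra k A]
    (𝒜 : G → Submodule k A)
    (hgrade : ∀ (g h : G) (a b : A), a ∈ 𝒜 g → b ∈ 𝒜 h → a * b ∈ 𝒜 (g + h))
    (hnzd : ∀ a b : A, a * b = 0 → a = 0 ∨ b = 0)
    (ε : G → G → kˣ)
    (hskew : ∀ g h : G, ε g h * ε h g = 1)
    (hmul₁ : ∀ g h l : G, ε (g + h) l = ε g l * ε h l)
    (hmul₂ : ∀ g h l : G, ε g (h + l) = ε g h * ε g l)
    (hcomm : ∀ (g h : G) (a b : A), a ∈ 𝒜 g → b ∈ 𝒜 h →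
      a * b = (ε g h : k) • (b * a))
    (φ₁ φ₂ : A ≃ₐ[k] A)
    (hφcomm : ∀ a : A, φ₁ (φ₂ a) = φ₂ (φ₁ a))
    (hφ₁ : ∀ (g : G) (a : A), a ∈ 𝒜 g → φ₁ a ∈ 𝒜 g)
    (hφ₂ : ∀ (g : G) (a : A), a ∈ 𝒜 g → φ₂ a ∈ 𝒜 g)
    (h₀ : A) (hh₀ : h₀ ∈ 𝒜 (0 : G))
    (p : A → A → A)
    (hp : ∀ a b : A, p a b = φ₁ a * φ₂ b * h₀) :
    ∀ (g₁ g₂ g₃ g₄ : G) (a b c d : A),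
      a ∈ 𝒜 g₁ → b ∈ 𝒜 g₂ → c ∈ 𝒜 g₃ → d ∈ 𝒜 g₄ →
      p (p a b) (p c d) = (ε g₂ g₃ : k) • p (p a c) (p b d) := by
  intro g₁ g₂ g₃ g₄ a b c d ha hb hc hd
  have hε0 : ∀ g, ε 0 g = 1 := fun g => by simpa using hmul₁ 0 0 g
  have hcentral : ∀ (g : G) (x : A), x ∈ 𝒜 g → φ₁ h₀ * x = x * φ₁ h₀ := fun g x hx => by
    simpa [hε0] using hcomm 0 g _ x (hφ₁ 0 _ hh₀) hx
  have hB : φ₁ (φ₂ b) ∈ 𝒜 g₂ := hφ₁ _ _ (hφ₂ _ _ hb)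
  have hC : φ₂ (φ₁ c) ∈ 𝒜 g₃ := hφ₂ _ _ (hφ₁ _ _ hc)
  have hmid : φ₁ (φ₂ b) * φ₁ h₀ * φ₂ (φ₁ c) =
      (ε g₂ g₃ : k) • (φ₂ (φ₁ c) * φ₁ h₀ * φ₁ (φ₂ b)) := by
    rw [mul_assoc, hcentral _ _ hC, ← mul_assoc, hcomm _ _ _ _ hB hC, smul_mul_assoc,
      mul_assoc, ← hcentral _ _ hB, ← mul_assoc]
  simp only [hp, map_mul]
  rw [hφcomm c, ← hφcomm b]
  calc _ = φ₁ (φ₁ a) * (φ₁ (φ₂ b) * φ₁ h₀ * φ₂ (φ₁ c)) * (φ₂ (φ₂ d) * φ₂ h₀ * h₀) := by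
        simp only [mul_assoc]
    _ = _ := by
        rw [hmid]
        simp only [mul_smul_comm, smul_mul_assoc, mul_assoc]
end

section
/- Let k be a field, G an additive abelian group, A an associative G-graded k-algebra with no zero divisors, ε : G → G → kˣ a bimultiplicative skew-symmetric commutation factor (ε g h * ε h g = 1, ε (g+h) l = ε g l * ε h l, ε g (h+l) = ε g h * ε g l) such that A is ε-commutative (a * b = ε g h • (b * a) for homogeneous a ∈ 𝒜 g, b ∈ 𝒜 h). Let φ₁, φ₂, φ₃ be three pairwise commuting k-algebra automorphisms of A preserving each component 𝒜 g, and h₀ ∈ 𝒜 0 a fixed degree-zero element. Define the ternary product μ₃(a,b,c) := φ₁(a) * φ₂(b) * φ₃(c) * h₀. Then (ternary Toyoda-type theorem) for all degrees g_{ij} ∈ G and all homogeneous a_{ij} ∈ 𝒜 g_{ij} (i,j = 1,2,3): μ₃(μ₃(a₁₁,a₁₂,a₁₃), μ₃(a₂₁,a₂₂,a₂₃), μ₃(a₃₁,a₃₂,a₃₃)) = K • μ₃(μ₃(a₁₁,a₂₁,a₃₁), μ₃(a₁₂,a₂₂,a₃₂), μ₃(a₁₃,a₂₃,a₃₃)),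 where K ∈ kˣ is the product of the values ε g_{ij} g_{kl} over all inversion pairs ((i,j),(k,l)) with i < k and l < j, explicitly K = (ε g₁₂ g₂₁)(ε g₁₂ g₃₁)(ε g₁₃ g₂₁)(ε g₁₃ g₂₂)(ε g₁₃ g₃₁)(ε g₁₃ g₃₂)(ε g₂₂ g₃₁)(ε g₂₃ g₃₁)(ε g₂₃ g₃₂); i.e. the ternary product μ₃ is almost medial with mediality factor expressed through the commutation factor ε. -/
/-!
Since the `φᵢ` commute, both sides are products of the same nine homogeneous factors
`xᵢⱼ = φᵢ (φⱼ aᵢⱼ)` and of `φ₁ h₀`, `φ₂ h₀`, `φ₃ h₀`, `h₀`. The latter have degree `0`, so they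
commute with every homogeneous element (`commute_of_mem_zero`) and can be collected on the right.
What is left is to pass from the row-by-row to the column-by-column order of the `xᵢⱼ`
(`rows_eq_smul_columns`); each transposition of an inverted pair costs one value of `ε`.
-/

/-- A degree-zero element commutes with every homogeneous element, because bimultiplicativity
forces `ε 0 g = 1`. -/
theorem commute_of_mem_zero {k G A : Type*} [Field k] [AddCommGroup G] [Ring A] [Algebra k A]
    {𝒜 : G → Submodule k A} {ε : G → G → kˣ}
    (hmul₁ : ∀ g h l : G, ε (g + h) l = ε g l * ε h l)
    (hcomm : ∀ (g h : G) (a b : A), a ∈ 𝒜 g → b ∈ 𝒜 h → a * b = (ε g h : k) • (b * a))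
    {g : G} {c a : A} (hc : c ∈ 𝒜 0) (ha : a ∈ 𝒜 g) : Commute c a := by
  have h1 : ε 0 g = 1 := by simpa using hmul₁ 0 0 g
  have h2 := hcomm 0 g c a hc ha
  rwa [h1, Units.val_one, one_smul] at h2

/-- Reordering a `3 × 3` array of homogeneous elements from rows to columns multiplies the product
by the values of `ε` on the inverted pairs. -/
theorem rows_eq_smul_columns {k G A : Type*} [Field k] [AddCommGroup G] [Ring A] [Algebra k A]
    {𝒜 : G → Submodule k A} {ε : G → G → kˣ}
    (hgrade : ∀ (g h : G) (a b : A), a ∈ 𝒜 g → b ∈ 𝒜 h → a * b ∈ 𝒜 (g + h))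
    (hmul₁ : ∀ g h l : G, ε (g + h) l = ε g l * ε h l)
    (hcomm : ∀ (g h : G) (a b : A), a ∈ 𝒜 g → b ∈ 𝒜 h → a * b = (ε g h : k) • (b * a))
    {g₁₂ g₁₃ g₂₁ g₂₂ g₂₃ g₃₁ g₃₂ : G} {x₁₂ x₁₃ x₂₁ x₂₂ x₂₃ x₃₁ x₃₂ : A} (x₁₁ x₃₃ : A)
    (h₁₂ : x₁₂ ∈ 𝒜 g₁₂) (h₁₃ : x₁₃ ∈ 𝒜 g₁₃) (h₂₁ : x₂₁ ∈ 𝒜 g₂₁) (h₂₂ : x₂₂ ∈ 𝒜 g₂₂)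
    (h₂₃ : x₂₃ ∈ 𝒜 g₂₃) (h₃₁ : x₃₁ ∈ 𝒜 g₃₁) (h₃₂ : x₃₂ ∈ 𝒜 g₃₂) :
    (x₁₁ * x₁₂ * x₁₃) * (x₂₁ * x₂₂ * x₂₃) * (x₃₁ * x₃₂ * x₃₃)
      = ((ε g₁₂ g₂₁ * ε g₁₂ g₃₁ * ε g₁₃ g₂₁ * ε g₁₃ g₂₂ * ε g₁₃ g₃₁ *
            ε g₁₃ g₃₂ * ε g₂₂ g₃₁ * ε g₂₃ g₃₁ * ε g₂₃ g₃₂ : kˣ) : k) •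
        ((x₁₁ * x₂₁ * x₃₁) * (x₁₂ * x₂₂ * x₃₂) * (x₁₃ * x₂₃ * x₃₃)) := by
  have e1 := hcomm _ _ _ _ (hgrade _ _ _ _ h₁₂ h₁₃) h₂₁
  have e2 := hcomm _ _ _ _ h₁₃ h₂₂
  have e3 := hcomm _ _ _ _
    (hgrade _ _ _ _ (hgrade _ _ _ _ h₁₂ h₂₂) (hgrade _ _ _ _ h₁₃ h₂₃)) h₃₁
  have e4 := hcomm _ _ _ _ (hgrade _ _ _ _ h₁₃ h₂₃) h₃₂
  calc (x₁₁ * x₁₂ * x₁₃) * (x₂₁ * x₂₂ * x₂₃) * (x₃₁ * x₃₂ * x₃₃)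
      = x₁₁ * (x₁₂ * x₁₃ * x₂₁) * x₂₂ * x₂₃ * x₃₁ * x₃₂ * x₃₃ := by simp only [mul_assoc]
    _ = (ε (g₁₂ + g₁₃) g₂₁ : k) •
          (x₁₁ * x₂₁ * x₁₂ * (x₁₃ * x₂₂) * x₂₃ * x₃₁ * x₃₂ * x₃₃) := by
        rw [e1]; simp only [mul_assoc, smul_mul_assoc, mul_smul_comm]
    _ = (ε (g₁₂ + g₁₃) g₂₁ : k) • (ε g₁₃ g₂₂ : k) •
          (x₁₁ * x₂₁ * (x₁₂ * x₂₂ * (x₁₃ * x₂₃) * x₃₁) * x₃₂ * x₃₃) := by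
        rw [e2]; simp only [mul_assoc, smul_mul_assoc, mul_smul_comm]
    _ = (ε (g₁₂ + g₁₃) g₂₁ : k) • (ε g₁₃ g₂₂ : k) • (ε (g₁₂ + g₂₂ + (g₁₃ + g₂₃)) g₃₁ : k) •
          (x₁₁ * x₂₁ * x₃₁ * x₁₂ * x₂₂ * (x₁₃ * x₂₃ * x₃₂) * x₃₃) := by
        rw [e3]; simp only [mul_assoc, smul_mul_assoc, mul_smul_comm]
    _ = (ε (g₁₂ + g₁₃) g₂₁ : k) • (ε g₁₃ g₂₂ : k) • (ε (g₁₂ + g₂₂ + (g₁₃ + g₂₃)) g₃₁ : k) •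
          (ε (g₁₃ + g₂₃) g₃₂ : k) •
          ((x₁₁ * x₂₁ * x₃₁) * (x₁₂ * x₂₂ * x₃₂) * (x₁₃ * x₂₃ * x₃₃)) := by
        rw [e4]; simp only [mul_assoc, smul_mul_assoc, mul_smul_comm]
    _ = _ := by
        simp only [smul_smul, hmul₁, Units.val_mul]
        congr 1
        ring

/-- Factors `c`, `d` that commute with the later blocks can be moved to the right end. -/
theorem collect_right {A : Type*} [Ring A] {x y z c d e f : A}
    (hcy : Commute c y) (hcz : Commute c z) (hdz : Commute d z) :
    (x * c) * (y * d) * (z * e) * f = x * y * z * (c * d * e * f) := by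
  calc (x * c) * (y * d) * (z * e) * f = x * (c * y) * (d * z) * e * f := by
        simp only [mul_assoc]
    _ = x * y * (c * z) * d * e * f := by
        rw [hcy.eq, hdz.eq]; simp only [mul_assoc]
    _ = _ := by rw [hcz.eq]; simp only [mul_assoc]


/-- Ternary Toyoda-type theorem: the ternary product
`μ₃ (a,b,c) := φ₁ a * φ₂ b * φ₃ c * h₀` on an ε-commutative graded algebra is
almost medial, with mediality factor the product of ε over inversion pairs. -/
theorem ternary_toyoda_almost_medial
    (k : Type*) [Field k] (G : Type*) [AddCommGroup G]
    (A : Type*) [Ring A] [Algebra k A]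
    (𝒜 : G → Submodule k A)
    (hgrade : ∀ (g h : G) (a b : A), a ∈ 𝒜 g → b ∈ 𝒜 h → a * b ∈ 𝒜 (g + h))
    (hnzd : ∀ a b : A, a * b = 0 → a = 0 ∨ b = 0)
    (ε : G → G → kˣ)
    (hskew : ∀ g h : G, ε g h * ε h g = 1)
    (hmul₁ : ∀ g h l : G, ε (g + h) l = ε g l * ε h l)
    (hmul₂ : ∀ g h l : G, ε g (h + l) = ε g h * ε g l)
    (hcomm : ∀ (g h : G) (a b : A), a ∈ 𝒜 g → b ∈ 𝒜 h →
      a * b = (ε g h : k) • (b * a))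
    (φ₁ φ₂ φ₃ : A ≃ₐ[k] A)
    (hφ₁₂ : ∀ a : A, φ₁ (φ₂ a) = φ₂ (φ₁ a))
    (hφ₁₃ : ∀ a : A, φ₁ (φ₃ a) = φ₃ (φ₁ a))
    (hφ₂₃ : ∀ a : A, φ₂ (φ₃ a) = φ₃ (φ₂ a))
    (hφ₁ : ∀ (g : G) (a : A), a ∈ 𝒜 g → φ₁ a ∈ 𝒜 g)
    (hφ₂ : ∀ (g : G) (a : A), a ∈ 𝒜 g → φ₂ a ∈ 𝒜 g)
    (hφ₃ : ∀ (g : G) (a : A), a ∈ 𝒜 g → φ₃ a ∈ 𝒜 g)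
    (h₀ : A) (hh₀ : h₀ ∈ 𝒜 (0 : G))
    (μ : A → A → A → A)
    (hμ : ∀ a b c : A, μ a b c = φ₁ a * φ₂ b * φ₃ c * h₀) :
    ∀ (g₁₁ g₁₂ g₁₃ g₂₁ g₂₂ g₂₃ g₃₁ g₃₂ g₃₃ : G)
      (a₁₁ a₁₂ a₁₃ a₂₁ a₂₂ a₂₃ a₃₁ a₃₂ a₃₃ : A),
      a₁₁ ∈ 𝒜 g₁₁ → a₁₂ ∈ 𝒜 g₁₂ → a₁₃ ∈ 𝒜 g₁₃ →
      a₂₁ ∈ 𝒜 g₂₁ → a₂₂ ∈ 𝒜 g₂₂ → a₂₃ ∈ 𝒜 g₂₃ →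
      a₃₁ ∈ 𝒜 g₃₁ → a₃₂ ∈ 𝒜 g₃₂ → a₃₃ ∈ 𝒜 g₃₃ →
      μ (μ a₁₁ a₁₂ a₁₃) (μ a₂₁ a₂₂ a₂₃) (μ a₃₁ a₃₂ a₃₃)
        = ((ε g₁₂ g₂₁ * ε g₁₂ g₃₁ * ε g₁₃ g₂₁ * ε g₁₃ g₂₂ * ε g₁₃ g₃₁ *
            ε g₁₃ g₃₂ * ε g₂₂ g₃₁ * ε g₂₃ g₃₁ * ε g₂₃ g₃₂ : kˣ) : k) •
          μ (μ a₁₁ a₂₁ a₃₁) (μ a₁₂ a₂₂ a₃₂) (μ a₁₃ a₂₃ a₃₃) := by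
  intro g₁₁ g₁₂ g₁₃ g₂₁ g₂₂ g₂₃ g₃₁ g₃₂ g₃₃ a₁₁ a₁₂ a₁₃ a₂₁ a₂₂ a₂₃ a₃₁ a₃₂ a₃₃
    h₁₁ h₁₂ h₁₃ h₂₁ h₂₂ h₂₃ h₃₁ h₃₂ h₃₃
  simp only [hμ, map_mul]
  -- Normalise each `φᵢ (φⱼ aᵢⱼ)` so that the automorphism of smaller index is applied last.
  simp only [← hφ₁₂, ← hφ₁₃, ← hφ₂₃]
  have x₁₂ := hφ₁ _ _ (hφ₂ _ _ h₁₂)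
  have x₁₃ := hφ₁ _ _ (hφ₃ _ _ h₁₃)
  have x₂₁ := hφ₁ _ _ (hφ₂ _ _ h₂₁)
  have x₂₂ := hφ₂ _ _ (hφ₂ _ _ h₂₂)
  have x₂₃ := hφ₂ _ _ (hφ₃ _ _ h₂₃)
  have x₃₁ := hφ₁ _ _ (hφ₃ _ _ h₃₁)
  have x₃₂ := hφ₂ _ _ (hφ₃ _ _ h₃₂)
  have x₃₃ := hφ₃ _ _ (hφ₃ _ _ h₃₃)
  have mem3 {g h l : G} {a b c : A} (ha : a ∈ 𝒜 g) (hb : b ∈ 𝒜 h) (hc : c ∈ 𝒜 l) :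
      a * b * c ∈ 𝒜 (g + h + l) := hgrade _ _ _ _ (hgrade _ _ _ _ ha hb) hc
  have c₁ {g : G} {a : A} (ha : a ∈ 𝒜 g) : Commute (φ₁ h₀) a :=
    commute_of_mem_zero hmul₁ hcomm (hφ₁ _ _ hh₀) ha
  have c₂ {g : G} {a : A} (ha : a ∈ 𝒜 g) : Commute (φ₂ h₀) a :=
    commute_of_mem_zero hmul₁ hcomm (hφ₂ _ _ hh₀) ha
  rw [collect_right (c₁ (mem3 x₂₁ x₂₂ x₂₃)) (c₁ (mem3 x₃₁ x₃₂ x₃₃)) (c₂ (mem3 x₃₁ x₃₂ x₃₃)),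
    collect_right (c₁ (mem3 x₁₂ x₂₂ x₃₂)) (c₁ (mem3 x₁₃ x₂₃ x₃₃)) (c₂ (mem3 x₁₃ x₂₃ x₃₃)),
    rows_eq_smul_columns hgrade hmul₁ hcomm _ _ x₁₂ x₁₃ x₂₁ x₂₂ x₂₃ x₃₁ x₃₂, smul_mul_assoc]
end

section
/- Let k be a field, G an additive abelian group, and A an associative G-graded k-algebra with no zero divisors in which every component 𝒜 g contains a nonzero element. Suppose A is 0-level almost commutative with factor ε₀ : G → G → kˣ, i.e. ε₀ g h • (a * b) = b * a for all homogeneous a ∈ 𝒜 g, b ∈ 𝒜 h. Then ε₀ satisfies, for all g, h, l ∈ G: (i) ε₀ g h * ε₀ h g = 1; (ii) ε₀ (g+h) l = ε₀ g l * ε₀ h l; (iii) ε₀ g (h+l) = ε₀ g h * ε₀ g l. -/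
/-! Pick nonzero homogeneous `a`, `b`, `c` of degrees `g`, `h`, `l`. Moving one factor past the others
in `a * b` or `a * b * c`, either at once or one factor at a time, gives the same product multiplied
by the two sides of each identity; the product is nonzero since `A` has no zero divisors, so the
scalars agree. -/


/-- Properties of the 0-level commutation factor of a 0-level almost commutative
associative graded algebra: skew-symmetry and bimultiplicativity. -/
theorem zero_level_commutation_factor_props
    (k : Type*) [Field k] (G : Type*) [AddCommGroup G]
    (A : Type*) [Ring A] [Algebra k A]
    (𝒜 : G → Submodule k A)
    (hgrade : ∀ (g h : G) (a b : A), a ∈ 𝒜 g → b ∈ 𝒜 h → a * b ∈ 𝒜 (g + h))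
    (hnzd : ∀ a b : A, a * b = 0 → a = 0 ∨ b = 0)
    (hnz : ∀ g : G, ∃ a : A, a ∈ 𝒜 g ∧ a ≠ 0)
    (ε₀ : G → G → kˣ)
    (hcomm : ∀ (g h : G) (a b : A), a ∈ 𝒜 g → b ∈ 𝒜 h →
      (ε₀ g h : k) • (a * b) = b * a) :
    ∀ g h l : G,
      ε₀ g h * ε₀ h g = 1 ∧
      ε₀ (g + h) l = ε₀ g l * ε₀ h l ∧
      ε₀ g (h + l) = ε₀ g h * ε₀ g l := by
  -- scalars agreeing on a nonzero vector are equal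
  have cancel : ∀ (u v : kˣ) (x : A), x ≠ 0 → (u : k) • x = (v : k) • x → u = v :=
    fun u v x hx huv => Units.ext (smul_left_injective k hx huv)
  have mul_ne : ∀ a b : A, a ≠ 0 → b ≠ 0 → a * b ≠ 0 :=
    fun a b ha hb hab => (hnzd a b hab).elim ha hb
  intro g h l
  obtain ⟨a, ha, ha0⟩ := hnz g
  obtain ⟨b, hb, hb0⟩ := hnz h
  obtain ⟨c, hc, hc0⟩ := hnz l
  have hab := mul_ne a b ha0 hb0
  have habc := mul_ne (a * b) c hab hc0
  refine ⟨cancel _ _ (a * b) hab ?_, cancel _ _ (a * b * c) habc ?_,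
    cancel _ _ (a * b * c) habc ?_⟩
  · rw [mul_comm, Units.val_mul, mul_smul, hcomm g h a b ha hb, hcomm h g b a hb ha,
      Units.val_one, one_smul]
  · rw [hcomm (g + h) l (a * b) c (hgrade g h a b ha hb) hc, ← mul_assoc,
      ← hcomm g l a c ha hc, smul_mul_assoc, mul_assoc a c b, ← hcomm h l b c hb hc,
      mul_smul_comm, smul_smul, Units.val_mul, mul_assoc a b c]
  · rw [mul_assoc a b c, hcomm g (h + l) a (b * c) ha (hgrade h l b c hb hc), mul_assoc,
      ← hcomm g l a c ha hc, mul_smul_comm, ← mul_assoc, ← hcomm g h a b ha hb,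
      smul_mul_assoc, smul_smul, Units.val_mul, mul_comm (ε₀ g h : k), mul_assoc a b c]
end

section
/- Let k be a field, G an additive abelian group, and A an associative G-graded k-algebra with no zero divisors in which every component 𝒜 g contains a nonzero element. Suppose A is 0-level almost medial with mediality factor ρ₀ : G → G → G → G → kˣ, i.e. ρ₀ g₁ g₂ g₃ g₄ • (a * b * c * d) = a * c * b * d for all homogeneous a ∈ 𝒜 g₁, b ∈ 𝒜 g₂, c ∈ 𝒜 g₃, d ∈ 𝒜 g₄. Then for all g₁, g₂, g₃, g₄ ∈ G: ρ₀ g₁ g₂ g₃ g₄ * ρ₀ g₁ g₃ g₂ g₄ = 1. -/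
/-- The 0-level mediality factor of a 0-level almost medial graded algebra
satisfies `ρ₀ g₁ g₂ g₃ g₄ * ρ₀ g₁ g₃ g₂ g₄ = 1`. -/
theorem zero_level_mediality_factor_inverse
    (k : Type*) [Field k] (G : Type*) [AddCommGroup G]
    (A : Type*) [Ring A] [Algebra k A]
    (𝒜 : G → Submodule k A)
    (hgrade : ∀ (g h : G) (a b : A), a ∈ 𝒜 g → b ∈ 𝒜 h → a * b ∈ 𝒜 (g + h))
    (hnzd : ∀ a b : A, a * b = 0 → a = 0 ∨ b = 0)
    (hnz : ∀ g : G, ∃ a : A, a ∈ 𝒜 g ∧ a ≠ 0)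
    (ρ₀ : G → G → G → G → kˣ)
    (hmed : ∀ (g₁ g₂ g₃ g₄ : G) (a b c d : A),
      a ∈ 𝒜 g₁ → b ∈ 𝒜 g₂ → c ∈ 𝒜 g₃ → d ∈ 𝒜 g₄ →
      (ρ₀ g₁ g₂ g₃ g₄ : k) • (a * b * c * d) = a * c * b * d) :
    ∀ g₁ g₂ g₃ g₄ : G, ρ₀ g₁ g₂ g₃ g₄ * ρ₀ g₁ g₃ g₂ g₄ = 1 := by
  intro g₁ g₂ g₃ g₄
  obtain ⟨a, ha, ha0⟩ := hnz g₁
  obtain ⟨b, hb, hb0⟩ := hnz g₂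
  obtain ⟨c, hc, hc0⟩ := hnz g₃
  obtain ⟨d, hd, hd0⟩ := hnz g₄
  have hne : a * b * c * d ≠ 0 := by
    intro h
    rcases hnzd _ _ h with h | h
    · rcases hnzd _ _ h with h | h
      · exact (hnzd _ _ h).elim ha0 hb0
      · exact hc0 h
    · exact hd0 h
  have h₁ := hmed g₁ g₂ g₃ g₄ a b c d ha hb hc hd
  have h₂ := hmed g₁ g₃ g₂ g₄ a c b d ha hc hb hd
  -- Swapping the middle factors twice rescales the nonzero product `a * b * c * d`
  -- by `ρ₀ g₁ g₃ g₂ g₄ * ρ₀ g₁ g₂ g₃ g₄` and also fixes it.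
  rw [← h₁, smul_smul] at h₂
  have h₃ : ((ρ₀ g₁ g₃ g₂ g₄ : k) * ρ₀ g₁ g₂ g₃ g₄) = 1 :=
    smul_left_injective k hne (by simpa using h₂)
  ext
  rw [Units.val_mul, mul_comm, h₃, Units.val_one]
end

section
/- Let k be a field, G an additive abelian group, and A an associative G-graded k-algebra with no zero divisors in which every component 𝒜 g contains a nonzero element. Suppose A is 0-level almost medial with mediality factor ρ₀ : G → G → G → G → kˣ, i.e. ρ₀ g₁ g₂ g₃ g₄ • (a * b * c * d) = a * c * b * d for homogeneous elements of the indicated degrees. Then for all a', b', c', d', f', g', h' ∈ G: ρ₀ a' (c' + d' + f' + g') b' h' = ρ₀ a' c' b' d' * ρ₀ c' d' b' f' * ρ₀ d' f' b' g' * ρ₀ f' g' b' h'. -/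
/-!
Choose nonzero homogeneous `a, b, c, d, f, g, h` of the given degrees. The words `a c d f g b h`
and `a b c d f g h` are related in two ways: by moving `b` past the block `c d f g`, homogeneous
of degree `c' + d' + f' + g'`, in one step, or by moving it past `g`, `f`, `d`, `c` one letter at
a time. So the two scalars agree after acting on `a c d f g b h`, which is nonzero because `A` has
no zero divisors, and hence they are equal.
-/

/-- The 0-level mediality factor of a 0-level almost medial graded algebra
satisfies the relation (r02). -/
theorem zero_level_mediality_factor_rel_left
    (k : Type*) [Field k] (G : Type*) [AddCommGroup G]
    (A : Type*) [Ring A] [Algebra k A]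
    (𝒜 : G → Submodule k A)
    (hgrade : ∀ (g h : G) (a b : A), a ∈ 𝒜 g → b ∈ 𝒜 h → a * b ∈ 𝒜 (g + h))
    (hnzd : ∀ a b : A, a * b = 0 → a = 0 ∨ b = 0)
    (hnz : ∀ g : G, ∃ a : A, a ∈ 𝒜 g ∧ a ≠ 0)
    (ρ₀ : G → G → G → G → kˣ)
    (hmed : ∀ (g₁ g₂ g₃ g₄ : G) (a b c d : A),
      a ∈ 𝒜 g₁ → b ∈ 𝒜 g₂ → c ∈ 𝒜 g₃ → d ∈ 𝒜 g₄ →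
      (ρ₀ g₁ g₂ g₃ g₄ : k) • (a * b * c * d) = a * c * b * d) :
    ∀ a' b' c' d' f' g' h' : G,
      ρ₀ a' (c' + d' + f' + g') b' h'
        = ρ₀ a' c' b' d' * ρ₀ c' d' b' f' * ρ₀ d' f' b' g' * ρ₀ f' g' b' h' := by
  intro a' b' c' d' f' g' h'
  obtain ⟨a, ha, ha0⟩ := hnz a'
  obtain ⟨b, hb, hb0⟩ := hnz b'
  obtain ⟨c, hc, hc0⟩ := hnz c'
  obtain ⟨d, hd, hd0⟩ := hnz d'
  obtain ⟨f, hf, hf0⟩ := hnz f'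
  obtain ⟨g, hg, hg0⟩ := hnz g'
  obtain ⟨h, hh, hh0⟩ := hnz h'
  have hmul : ∀ x y : A, x ≠ 0 → y ≠ 0 → x * y ≠ 0 := fun x y hx hy hxy =>
    (hnzd x y hxy).elim hx hy
  have hW : a * (c * d * f * g) * b * h ≠ 0 :=
    hmul _ _ (hmul _ _ (hmul _ _ ha0 (hmul _ _ (hmul _ _ (hmul _ _ hc0 hd0) hf0) hg0)) hb0) hh0
  have hcdfg : c * d * f * g ∈ 𝒜 (c' + d' + f' + g') :=
    hgrade _ _ _ _ (hgrade _ _ _ _ (hgrade _ _ _ _ hc hd) hf) hg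
  have hblock := hmed _ _ _ _ _ _ _ _ ha hcdfg hb hh
  have h₁ := hmed _ _ _ _ _ _ _ _ ha hc hb hd
  have h₂ := hmed _ _ _ _ _ _ _ _ hc hd hb hf
  have h₃ := hmed _ _ _ _ _ _ _ _ hd hf hb hg
  have h₄ := hmed _ _ _ _ _ _ _ _ hf hg hb hh
  have hsteps : ((ρ₀ a' c' b' d' : k) * ρ₀ c' d' b' f' * ρ₀ d' f' b' g' * ρ₀ f' g' b' h') •
      (a * (c * d * f * g) * b * h) = a * b * (c * d * f * g) * h := by
    calc
      _ = ((ρ₀ a' c' b' d' : k) * ρ₀ c' d' b' f' * ρ₀ d' f' b' g') •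
          (a * c * d * ((ρ₀ f' g' b' h' : k) • (f * g * b * h))) := by
        rw [mul_smul_comm, smul_smul]; simp only [mul_assoc]
      _ = ((ρ₀ a' c' b' d' : k) * ρ₀ c' d' b' f') •
          (a * c * ((ρ₀ d' f' b' g' : k) • (d * f * b * g)) * h) := by
        rw [h₄, mul_smul_comm, smul_mul_assoc, smul_smul]; simp only [mul_assoc]
      _ = (ρ₀ a' c' b' d' : k) •
          (a * ((ρ₀ c' d' b' f' : k) • (c * d * b * f)) * g * h) := by
        rw [h₃, mul_smul_comm, smul_mul_assoc, smul_mul_assoc, smul_smul]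
        simp only [mul_assoc]
      _ = ((ρ₀ a' c' b' d' : k) • (a * c * b * d)) * f * g * h := by
        rw [h₂, smul_mul_assoc, smul_mul_assoc, smul_mul_assoc]; simp only [mul_assoc]
      _ = a * b * (c * d * f * g) * h := by
        rw [h₁]; simp only [mul_assoc]
  apply Units.ext
  push_cast
  exact smul_left_injective k hW (hblock.trans hsteps.symm)
end

section
/- Let k be a field, G an additive abelian group, and A an associative G-graded k-algebra with no zero divisors in which every component 𝒜 g contains a nonzero element. Suppose A is 0-level almost medial with mediality factor ρ₀ : G → G → G → G → kˣ, i.e. ρ₀ g₁ g₂ g₃ g₄ • (a * b * c * d) = a * c * b * d for homogeneous elements of the indicated degrees. Then for all a', b', c', d', f', g', h' ∈ G: ρ₀ a' g' (b' + c' + d' + f') h' = ρ₀ a' g' b' c' * ρ₀ b' g' c' d' * ρ₀ c' g' d' f' * ρ₀ d' g' f' h'. -/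
/-!
Pick nonzero homogeneous `a, b, c, d, f, u, h`, with `u` of degree `g'`. The word `a u b c d f h`
becomes `a b c d f u h` by moving `u` past the block `b c d f` at once, or past `b`, `c`, `d`, `f`
one letter at a time, each time using the neighbouring letters as outer factors. The two resulting
scalars multiply the same word, which is nonzero since `A` has no zero divisors, so they agree.
-/

/-- The 0-level mediality factor of a 0-level almost medial graded algebra
satisfies the relation (r03). -/
theorem zero_level_mediality_factor_rel_right
    (k : Type*) [Field k] (G : Type*) [AddCommGroup G]
    (A : Type*) [Ring A] [Algebra k A]
    (𝒜 : G → Submodule k A)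
    (hgrade : ∀ (g h : G) (a b : A), a ∈ 𝒜 g → b ∈ 𝒜 h → a * b ∈ 𝒜 (g + h))
    (hnzd : ∀ a b : A, a * b = 0 → a = 0 ∨ b = 0)
    (hnz : ∀ g : G, ∃ a : A, a ∈ 𝒜 g ∧ a ≠ 0)
    (ρ₀ : G → G → G → G → kˣ)
    (hmed : ∀ (g₁ g₂ g₃ g₄ : G) (a b c d : A),
      a ∈ 𝒜 g₁ → b ∈ 𝒜 g₂ → c ∈ 𝒜 g₃ → d ∈ 𝒜 g₄ →
      (ρ₀ g₁ g₂ g₃ g₄ : k) • (a * b * c * d) = a * c * b * d) :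
    ∀ a' b' c' d' f' g' h' : G,
      ρ₀ a' g' (b' + c' + d' + f') h'
        = ρ₀ a' g' b' c' * ρ₀ b' g' c' d' * ρ₀ c' g' d' f' * ρ₀ d' g' f' h' := by
  intro a' b' c' d' f' g' h'
  obtain ⟨a, ha, ha0⟩ := hnz a'
  obtain ⟨b, hb, hb0⟩ := hnz b'
  obtain ⟨c, hc, hc0⟩ := hnz c'
  obtain ⟨d, hd, hd0⟩ := hnz d'
  obtain ⟨f, hf, hf0⟩ := hnz f'
  obtain ⟨u, hu, hu0⟩ := hnz g'
  obtain ⟨h, hh, hh0⟩ := hnz h'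
  have hmul : ∀ {x y : A}, x ≠ 0 → y ≠ 0 → x * y ≠ 0 := fun hx hy hxy =>
    (hnzd _ _ hxy).elim hx hy
  have hw : a * u * b * c * d * f * h ≠ 0 :=
    hmul (hmul (hmul (hmul (hmul (hmul ha0 hu0) hb0) hc0) hd0) hf0) hh0
  have hB : b * c * d * f ∈ 𝒜 (b' + c' + d' + f') :=
    hgrade _ _ _ _ (hgrade _ _ _ _ (hgrade _ _ _ _ hb hc) hd) hf
  have e := hmed _ _ _ _ a u (b * c * d * f) h ha hu hB hh
  have e1 := congrArg (fun x => x * d * f * h) (hmed _ _ _ _ a u b c ha hu hb hc)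
  have e2 := congrArg (fun x => a * x * f * h) (hmed _ _ _ _ b u c d hb hu hc hd)
  have e3 := congrArg (fun x => a * b * x * h) (hmed _ _ _ _ c u d f hc hu hd hf)
  have e4 := congrArg (fun x => a * b * c * x) (hmed _ _ _ _ d u f h hd hu hf hh)
  simp only [smul_mul_assoc, mul_smul_comm, mul_assoc] at e e1 e2 e3 e4 hw
  apply Units.ext
  apply smul_left_injective k hw
  simp only [Units.val_mul]
  rw [e, ← e4, ← e3, ← e2, ← e1]
  simp only [smul_smul]
  congr 1
  ring
end

section
/- Let k be a field, G an additive abelian group, and A an associative G-graded k-algebra with no zero divisors in which every component 𝒜 g contains a nonzero element. Suppose A is 0-level almost medial with mediality factor ρ₀ : G → G → G → G → kˣ, i.e. ρ₀ g₁ g₂ g₃ g₄ • (a * b * c * d) = a * c * b * d for homogeneous elements of the indicated degrees. Then A is almost commutative: for all g₁, g₂, g₃, g₄ ∈ G and all homogeneous b ∈ 𝒜 g₂, c ∈ 𝒜 g₃, one has ρ₀ g₁ g₂ g₃ g₄ • (b * c) = c * b; in particular the value ρ₀ g₁ g₂ g₃ g₄ does not depend on g₁ and g₄, and ε₀ g₂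 g₃ := ρ₀ g₁ g₂ g₃ g₄ is a 0-level commutation factor for A. -/
/-! For nonzero homogeneous `a` and `d` of degrees `g₁` and `g₄`, mediality reads
`a * (ρ₀ g₁ g₂ g₃ g₄ • (b * c) - c * b) * d = 0`, and cancelling `a` and `d` gives the
commutation relation. Applied to nonzero `b` and `c`, for which `b * c ≠ 0`, this relation
determines the scalar, which therefore depends on `g₂` and `g₃` only. -/

/-- A cancellative (no zero divisors) 0-level almost medial graded algebra is
almost commutative: the mediality factor gives a commutation factor
`ε₀ g₂ g₃ := ρ₀ g₁ g₂ g₃ g₄`, which is independent of `g₁` and `g₄`. -/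
theorem almost_medial_implies_almost_commutative
    (k : Type*) [Field k] (G : Type*) [AddCommGroup G]
    (A : Type*) [Ring A] [Algebra k A]
    (𝒜 : G → Submodule k A)
    (hgrade : ∀ (g h : G) (a b : A), a ∈ 𝒜 g → b ∈ 𝒜 h → a * b ∈ 𝒜 (g + h))
    (hnzd : ∀ a b : A, a * b = 0 → a = 0 ∨ b = 0)
    (hnz : ∀ g : G, ∃ a : A, a ∈ 𝒜 g ∧ a ≠ 0)
    (ρ₀ : G → G → G → G → kˣ)
    (hmed : ∀ (g₁ g₂ g₃ g₄ : G) (a b c d : A),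
      a ∈ 𝒜 g₁ → b ∈ 𝒜 g₂ → c ∈ 𝒜 g₃ → d ∈ 𝒜 g₄ →
      (ρ₀ g₁ g₂ g₃ g₄ : k) • (a * b * c * d) = a * c * b * d) :
    (∀ (g₁ g₂ g₃ g₄ : G) (b c : A), b ∈ 𝒜 g₂ → c ∈ 𝒜 g₃ →
      (ρ₀ g₁ g₂ g₃ g₄ : k) • (b * c) = c * b) ∧
    (∀ g₁ g₁' g₄ g₄' g₂ g₃ : G, ρ₀ g₁ g₂ g₃ g₄ = ρ₀ g₁' g₂ g₃ g₄') := by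
  have key : ∀ (g₁ g₂ g₃ g₄ : G) (b c : A), b ∈ 𝒜 g₂ → c ∈ 𝒜 g₃ →
      (ρ₀ g₁ g₂ g₃ g₄ : k) • (b * c) = c * b := by
    intro g₁ g₂ g₃ g₄ b c hb hc
    obtain ⟨a, ha, ha0⟩ := hnz g₁
    obtain ⟨d, hd, hd0⟩ := hnz g₄
    -- Mediality says `a * (ρ • (b * c) - c * b) * d = 0`; cancel the nonzero `a` and `d`.
    have h : a * ((ρ₀ g₁ g₂ g₃ g₄ : k) • (b * c) - c * b) * d = 0 := by
      rw [mul_sub, sub_mul, sub_eq_zero, mul_smul_comm, smul_mul_assoc, ← mul_assoc, ← mul_assoc]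
      exact hmed g₁ g₂ g₃ g₄ a b c d ha hb hc hd
    exact sub_eq_zero.mp
      (((hnzd _ _ h).resolve_right hd0 |> hnzd _ _).resolve_left ha0)
  refine ⟨key, fun g₁ g₁' g₄ g₄' g₂ g₃ => ?_⟩
  obtain ⟨b, hb, hb0⟩ := hnz g₂
  obtain ⟨c, hc, hc0⟩ := hnz g₃
  -- Both scalars send the nonzero element `b * c` to `c * b`.
  have hbc : b * c ≠ 0 := fun h => (hnzd b c h).elim hb0 hc0
  exact Units.ext (smul_left_injective k hbc
    ((key g₁ g₂ g₃ g₄ b c hb hc).trans (key g₁' g₂ g₃ g₄' b c hb hc).symm))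
end

section
/- Let k be a field, G an additive abelian group, and A an associative G-graded k-algebra with no zero divisors in which every component 𝒜 g contains a nonzero element. Let σ : G → G → G → G → kˣ and define the higher twisted product of four homogeneous elements by μ⁴(a,b,c,d) := σ g₁ g₂ g₃ g₄ • (a * b * c * d) for a ∈ 𝒜 g₁, ..., d ∈ 𝒜 g₄. If μ⁴ is totally associative on homogeneous elements, i.e. μ⁴(μ⁴(a,b,c,d),t,u,v) = μ⁴(a,μ⁴(b,c,d,t),u,v) = μ⁴(a,b,μ⁴(c,d,t,u),v) = μ⁴(a,b,c,μ⁴(d,t,u,v)) for all homogeneous a,b,c,d,t,u,v, then σ satisfies the higher cocycle relations: for all g₁,...,g₇ ∈ G, σ g₁ g₂ g₃ g₄ * σ (g₁+g₂+g₃+g₄) g₅ g₆ g₇ = σ g₂ g₃ g₄ g₅ * σ g₁ (g₂+g₃+g₄+g₅) g₆ g₇ = σ g₃ g₄ g₅ g₆ * σ g₁ g₂ (g₃+g₄+g₅+g₆) g₇ = σ g₄ g₅ g₆ g₇ * σ g₁ g₂ g₃ (g₄+g₅+g₆+g₇). -/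
/-!
Evaluate total associativity on nonzero homogeneous elements `a, …, v` of degrees `g₁, …, g₇`.
By bilinearity and associativity of the product of `A`, each of the four bracketings is a product
of two values of `σ` acting on the same element `a * b * c * d * t * u * v`. This element is
nonzero because `A` has no zero divisors, so the scalars agree.
-/

/-- If the higher twisted product `μ⁴(a,b,c,d) := σ g₁ g₂ g₃ g₄ • (a*b*c*d)`
is totally associative on homogeneous elements, then the higher twisting
function σ satisfies the higher cocycle relations. -/
theorem higher_twisted_product_assoc_gives_higher_cocycle
    (k : Type*) [Field k] (G : Type*) [AddCommGroup G]
    (A : Type*) [Ring A] [Algebra k A]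
    (𝒜 : G → Submodule k A)
    (hgrade : ∀ (g h : G) (a b : A), a ∈ 𝒜 g → b ∈ 𝒜 h → a * b ∈ 𝒜 (g + h))
    (hnzd : ∀ a b : A, a * b = 0 → a = 0 ∨ b = 0)
    (hnz : ∀ g : G, ∃ a : A, a ∈ 𝒜 g ∧ a ≠ 0)
    (σ : G → G → G → G → kˣ)
    (hassoc : ∀ (g₁ g₂ g₃ g₄ g₅ g₆ g₇ : G) (a b c d t u v : A),
      a ∈ 𝒜 g₁ → b ∈ 𝒜 g₂ → c ∈ 𝒜 g₃ → d ∈ 𝒜 g₄ →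
      t ∈ 𝒜 g₅ → u ∈ 𝒜 g₆ → v ∈ 𝒜 g₇ →
      ((σ (g₁ + g₂ + g₃ + g₄) g₅ g₆ g₇ : k) •
          (((σ g₁ g₂ g₃ g₄ : k) • (a * b * c * d)) * t * u * v)
        = (σ g₁ (g₂ + g₃ + g₄ + g₅) g₆ g₇ : k) •
          (a * ((σ g₂ g₃ g₄ g₅ : k) • (b * c * d * t)) * u * v)) ∧
      ((σ g₁ (g₂ + g₃ + g₄ + g₅) g₆ g₇ : k) •
          (a * ((σ g₂ g₃ g₄ g₅ : k) • (b * c * d * t)) * u * v)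
        = (σ g₁ g₂ (g₃ + g₄ + g₅ + g₆) g₇ : k) •
          (a * b * ((σ g₃ g₄ g₅ g₆ : k) • (c * d * t * u)) * v)) ∧
      ((σ g₁ g₂ (g₃ + g₄ + g₅ + g₆) g₇ : k) •
          (a * b * ((σ g₃ g₄ g₅ g₆ : k) • (c * d * t * u)) * v)
        = (σ g₁ g₂ g₃ (g₄ + g₅ + g₆ + g₇) : k) •
          (a * b * c * ((σ g₄ g₅ g₆ g₇ : k) • (d * t * u * v))))) :
    ∀ g₁ g₂ g₃ g₄ g₅ g₆ g₇ : G,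
      (σ g₁ g₂ g₃ g₄ * σ (g₁ + g₂ + g₃ + g₄) g₅ g₆ g₇
        = σ g₂ g₃ g₄ g₅ * σ g₁ (g₂ + g₃ + g₄ + g₅) g₆ g₇) ∧
      (σ g₂ g₃ g₄ g₅ * σ g₁ (g₂ + g₃ + g₄ + g₅) g₆ g₇
        = σ g₃ g₄ g₅ g₆ * σ g₁ g₂ (g₃ + g₄ + g₅ + g₆) g₇) ∧
      (σ g₃ g₄ g₅ g₆ * σ g₁ g₂ (g₃ + g₄ + g₅ + g₆) g₇
        = σ g₄ g₅ g₆ g₇ * σ g₁ g₂ g₃ (g₄ + g₅ + g₆ + g₇)) := by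
  intro g₁ g₂ g₃ g₄ g₅ g₆ g₇
  obtain ⟨a, ha, ha0⟩ := hnz g₁
  obtain ⟨b, hb, hb0⟩ := hnz g₂
  obtain ⟨c, hc, hc0⟩ := hnz g₃
  obtain ⟨d, hd, hd0⟩ := hnz g₄
  obtain ⟨t, ht, ht0⟩ := hnz g₅
  obtain ⟨u, hu, hu0⟩ := hnz g₆
  obtain ⟨v, hv, hv0⟩ := hnz g₇
  have hmul : ∀ x y : A, x ≠ 0 → y ≠ 0 → x * y ≠ 0 := fun x y hx hy h =>
    (hnzd x y h).elim hx hy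
  have hne : a * (b * (c * (d * (t * (u * v))))) ≠ 0 :=
    hmul _ _ ha0 <| hmul _ _ hb0 <| hmul _ _ hc0 <| hmul _ _ hd0 <| hmul _ _ ht0 <|
      hmul _ _ hu0 hv0
  have hcancel : ∀ r s : k, r • (a * (b * (c * (d * (t * (u * v)))))) =
      s • (a * (b * (c * (d * (t * (u * v)))))) → r = s :=
    fun r s h => smul_left_injective k hne h
  obtain ⟨h₁, h₂, h₃⟩ := hassoc g₁ g₂ g₃ g₄ g₅ g₆ g₇ a b c d t u v ha hb hc hd ht hu hv
  simp only [smul_mul_assoc, mul_smul_comm, smul_smul, mul_assoc] at h₁ h₂ h₃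
  refine ⟨Units.ext ?_, Units.ext ?_, Units.ext ?_⟩ <;> rw [Units.val_mul, Units.val_mul]
  · simpa only [mul_comm] using hcancel _ _ h₁
  · simpa only [mul_comm] using hcancel _ _ h₂
  · simpa only [mul_comm] using hcancel _ _ h₃
end
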